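/- arXiv:2210.00679 — 3 statements merged into one kernel-verified Lean document; each statement's English description precedes it below -/
import Mathlib

section
/- Let σ, η > 0, let T ≥ 1 be an integer, let C = 6σ²η²(T+1), and define a sequence of reals by w_{T+1} = 1/(2C) and, for t from T down to 1, w_t = w_{t+1} + 6σ²η²·w_{t+1}². Then for every 1 ≤ t ≤ T+1, w_t ≤ 1/(C + 6σ²η²t). Consequently, the sequence satisfies w_t ≥ w_{t+1} + 6σ²η²w_{t+1}² for 1 ≤ t ≤ T, w_{t+1}η² ≤ 1/(6σ²(T+1)) ≤ 1/(4σ²) for 1 ≤ t ≤ T, and 1/(2C) ≤ w_t ≤ 1/C for all 1 ≤ t ≤ T+1. -/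
/-- Properties of the weight sequence for stochastic mirror descent with a fixed
step size. With `C = 6σ²η²(T+1)`, `w_{T+1} = 1/(2C)` and `w_t = w_{t+1} + 6σ²η² w_{t+1}²`
(backwards for `t = T, …, 1`), we have `w_t ≤ 1/(C + 6σ²η²t)` for `1 ≤ t ≤ T+1`; consequently
`w_t ≥ w_{t+1} + 6σ²η² w_{t+1}²`, `w_{t+1} η² ≤ 1/(6σ²(T+1)) ≤ 1/(4σ²)` for `1 ≤ t ≤ T`, and
`1/(2C) ≤ w_t ≤ 1/C` for all `1 ≤ t ≤ T+1`. -/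
theorem weights_fixed_step (σ η : ℝ) (hσ : 0 < σ) (hη : 0 < η) (T : ℕ) (hT : 1 ≤ T)
    (C : ℝ) (hC : C = 6 * σ ^ 2 * η ^ 2 * ((T : ℝ) + 1))
    (w : ℕ → ℝ)
    (hw_last : w (T + 1) = 1 / (2 * C))
    (hw_rec : ∀ t, 1 ≤ t → t ≤ T → w t = w (t + 1) + 6 * σ ^ 2 * η ^ 2 * w (t + 1) ^ 2) :
    (∀ t, 1 ≤ t → t ≤ T + 1 → w t ≤ 1 / (C + 6 * σ ^ 2 * η ^ 2 * (t : ℝ))) ∧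
    (∀ t, 1 ≤ t → t ≤ T → w (t + 1) + 6 * σ ^ 2 * η ^ 2 * w (t + 1) ^ 2 ≤ w t) ∧
    (∀ t, 1 ≤ t → t ≤ T →
      w (t + 1) * η ^ 2 ≤ 1 / (6 * σ ^ 2 * ((T : ℝ) + 1)) ∧
      1 / (6 * σ ^ 2 * ((T : ℝ) + 1)) ≤ 1 / (4 * σ ^ 2)) ∧
    (∀ t, 1 ≤ t → t ≤ T + 1 → 1 / (2 * C) ≤ w t ∧ w t ≤ 1 / C) := by
  obtain ⟨a, ha⟩ : ∃ a, a = 6 * σ ^ 2 * η ^ 2 := ⟨_, rfl⟩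
  have ha0 : 0 < a := by rw [ha]; positivity
  rw [← ha] at hC ⊢
  simp only [← ha] at hw_rec
  have hC0 : 0 < C := by rw [hC]; positivity
  have key : ∀ k t : ℕ, t + k = T + 1 → 1 ≤ t →
      1 / (2 * C) ≤ w t ∧ w t ≤ 1 / (C + a * (t : ℝ)) := by
    intro k
    induction k with
    | zero =>
      intro t ht _
      have h : t = T + 1 := by omega
      subst h
      rw [hw_last]
      refine ⟨le_refl _, le_of_eq ?_⟩
      congr 1
      push_cast
      rw [← hC]
      ring
    | succ k ih =>
      intro t ht h1
      obtain ⟨hl, hu⟩ := ih (t + 1) (by omega) (by omega)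
      rw [hw_rec t h1 (by omega)]
      have hpos : 0 < w (t + 1) := lt_of_lt_of_le (by positivity) hl
      refine ⟨by nlinarith [mul_pos ha0 (pow_pos hpos 2)], ?_⟩
      obtain ⟨y, hy⟩ : ∃ y, y = C + a * (t : ℝ) := ⟨_, rfl⟩
      have hy0 : 0 < y := by rw [hy]; positivity
      have hx : C + a * ((t + 1 : ℕ) : ℝ) = y + a := by rw [hy]; push_cast; ring
      rw [hx] at hu
      rw [← hy]
      calc w (t + 1) + a * w (t + 1) ^ 2
          ≤ 1 / (y + a) + a * (1 / (y + a)) ^ 2 := by gcongr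
        _ = (y + 2 * a) / (y + a) ^ 2 := by field_simp; ring
        _ ≤ 1 / y := by
          rw [div_le_div_iff₀ (by positivity) hy0]
          nlinarith [sq_nonneg a]
  have key2 : ∀ t, 1 ≤ t → t ≤ T + 1 → 1 / (2 * C) ≤ w t ∧ w t ≤ 1 / (C + a * (t : ℝ)) :=
    fun t h1 h2 => key (T + 1 - t) t (by omega) h1
  have key3 : ∀ t, 1 ≤ t → t ≤ T + 1 → w t ≤ 1 / C := by
    intro t h1 h2
    refine (key2 t h1 h2).2.trans (one_div_le_one_div_of_le hC0 ?_)
    have : 0 ≤ a * (t : ℝ) := by positivity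
    linarith
  refine ⟨fun t h1 h2 => (key2 t h1 h2).2, fun t h1 h2 => (hw_rec t h1 h2).ge,
    fun t h1 h2 => ⟨?_, ?_⟩, fun t h1 h2 => ⟨(key2 t h1 h2).1, key3 t h1 h2⟩⟩
  · calc w (t + 1) * η ^ 2 ≤ 1 / C * η ^ 2 := by
          have := key3 (t + 1) (by omega) (by omega)
          gcongr
      _ = 1 / (6 * σ ^ 2 * ((T : ℝ) + 1)) := by
          rw [hC, ha]
          field_simp
  · apply one_div_le_one_div_of_le (by positivity)
    have hT' : (1 : ℝ) ≤ T := by exact_mod_cast hT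
    nlinarith [pow_pos hσ 2]
end

section
/- Let σ > 0, let T ≥ 1 be an integer, let η_1,…,η_T be positive step sizes, let B_t = 6σ²·Σ_{i=1}^{t−1} η_i² for 1 ≤ t ≤ T+1, and let C = B_{T+1}. Define a sequence of reals by w_{T+1} = 1/(C + B_{T+1}) = 1/(2C) and, for t from T down to 1, w_t = w_{t+1} + 6σ²η_t²·w_{t+1}². Then for every 1 ≤ t ≤ T+1, w_t ≤ 1/(C + B_t). -/
/-- Weight sequence for stochastic mirror descent with time-varying step sizes.
With `B_t = 6σ² ∑_{i=1}^{t-1} η_i²`, `C = B_{T+1}`, `w_{T+1} = 1/(C + B_{T+1}) = 1/(2C)`, and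
`w_t = w_{t+1} + 6σ² η_t² w_{t+1}²` (backwards for `t = T, …, 1`), we have
`w_t ≤ 1/(C + B_t)` for every `1 ≤ t ≤ T+1`. -/
theorem weights_time_varying (σ : ℝ) (hσ : 0 < σ) (T : ℕ) (hT : 1 ≤ T)
    (η : ℕ → ℝ) (hη : ∀ t, 1 ≤ t → t ≤ T → 0 < η t)
    (B : ℕ → ℝ) (hB : ∀ t, B t = 6 * σ ^ 2 * ∑ i ∈ Finset.Ico 1 t, η i ^ 2)
    (C : ℝ) (hC : C = B (T + 1))
    (w : ℕ → ℝ)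
    (hw_last : w (T + 1) = 1 / (C + B (T + 1)))
    (hw_rec : ∀ t, 1 ≤ t → t ≤ T → w t = w (t + 1) + 6 * σ ^ 2 * η t ^ 2 * w (t + 1) ^ 2) :
    ∀ t, 1 ≤ t → t ≤ T + 1 → w t ≤ 1 / (C + B t) := by
  have hBnn : ∀ t, 0 ≤ B t := by
    intro t
    rw [hB t]
    positivity
  have hCpos : 0 < C := by
    rw [hC, hB]
    have h1 : 0 < ∑ i ∈ Finset.Ico 1 (T + 1), η i ^ 2 := by
      apply Finset.sum_pos
      · intro i hi
        rw [Finset.mem_Ico] at hi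
        have := hη i hi.1 (by omega)
        positivity
      · exact ⟨1, by rw [Finset.mem_Ico]; omega⟩
    positivity
  have key : ∀ k t, 1 ≤ t → t + k = T + 1 → 0 ≤ w t ∧ w t ≤ 1 / (C + B t) := by
    intro k
    induction k with
    | zero =>
      intro t _ h
      obtain rfl : t = T + 1 := by omega
      have := hBnn (T + 1)
      rw [hw_last]
      exact ⟨by positivity, le_rfl⟩
    | succ k ih =>
      intro t ht h
      obtain ⟨h0, h1⟩ := ih (t + 1) (by omega) (by omega)
      have hBs : B (t + 1) = B t + 6 * σ ^ 2 * η t ^ 2 := by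
        rw [hB, hB, Finset.sum_Ico_succ_top ht]
        ring
      rw [hw_rec t ht (by omega)]
      have hd : 0 ≤ 6 * σ ^ 2 * η t ^ 2 := by positivity
      have ha : 0 < C + B t := by linarith [hBnn t]
      rw [hBs, ← add_assoc] at h1
      generalize 6 * σ ^ 2 * η t ^ 2 = d at *
      generalize C + B t = a at *
      refine ⟨by positivity, ?_⟩
      have had : 0 < a + d := by linarith
      calc w (t + 1) + d * w (t + 1) ^ 2
          ≤ 1 / (a + d) + d * (1 / (a + d)) ^ 2 := by gcongr
        _ = (a + 2 * d) / (a + d) ^ 2 := by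
          field_simp
          ring
        _ ≤ 1 / a := by
          rw [div_le_div_iff₀ (by positivity) ha]
          nlinarith [sq_nonneg d]
  intro t ht htT
  exact (key (T + 1 - t) t ht (by omega)).2
end

section
/- Fix an iteration t of accelerated stochastic mirror descent. Let α_t ∈ (0,1], η_t > 0 with βα_tη_t < 1, let ĝ_t = ∇f(x_t) + ξ_t for some vector ξ_t, and suppose the iterates satisfy x_t = (1−α_t)y_{t−1} + α_t·z_{t−1}, y_t = (1−α_t)y_{t−1} + α_t·z_t, and z_t ∈ 𝒳 satisfies the first-order optimality condition ⟨η_t·ĝ_t + ∇ψ(z_t) − ∇ψ(z_{t−1}), x* − z_t⟩ ≥ 0 (i.e., z_t = argmin_{x∈𝒳}{η_t⟨ĝ_t, x⟩ + D(x, z_{t−1})}). Then (η_t/α_t)·(f(y_t) − f(x*)) − (η_t/α_t)·(1−α_t)·(f(y_{t−1}) − f(x*)) − η_t²G²/(1 − βα_tη_t) + D(x*, z_t) − D(x*, z_{t−1}) ≤ η_t·⟨ξ_t, x* − z_{t−1}⟩ + (η_t²/(1 − βα_tη_t))·‖ξ_t‖². -/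
open scoped RealInnerProductSpace

/-- One step of accelerated stochastic mirror descent. If
`x_t = (1-α_t) y_{t-1} + α_t z_{t-1}`, `y_t = (1-α_t) y_{t-1} + α_t z_t`, and `z_t`
satisfies the first-order optimality condition of
`argmin_{x ∈ 𝒳} {η_t ⟨∇f(x_t)+ξ_t, x⟩ + D(x, z_{t-1})}`, then
`(η_t/α_t)(f(y_t) − f(x*)) − (η_t/α_t)(1-α_t)(f(y_{t-1}) − f(x*)) − η_t²G²/(1-βα_tη_t)
  + D(x*, z_t) − D(x*, z_{t-1}) ≤ η_t ⟨ξ_t, x* − z_{t-1}⟩ + (η_t²/(1-βα_tη_t)) ‖ξ_t‖²`. -/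
theorem accelerated_mirror_descent_one_step {d : ℕ}
    (𝒳 : Set (EuclideanSpace ℝ (Fin d))) (h𝒳 : Convex ℝ 𝒳)
    (ψ f : EuclideanSpace ℝ (Fin d) → ℝ)
    (gradψ gradf : EuclideanSpace ℝ (Fin d) → EuclideanSpace ℝ (Fin d))
    (D : EuclideanSpace ℝ (Fin d) → EuclideanSpace ℝ (Fin d) → ℝ)
    (hD : ∀ x y, D x y = ψ x - ψ y - ⟪gradψ y, x - y⟫)
    (hD_lb : ∀ x y, (1 / 2) * ‖x - y‖ ^ 2 ≤ D x y)
    (G β : ℝ) (hG : 0 ≤ G) (hβ : 0 ≤ β)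
    (hconv : ∀ x ∈ 𝒳, ∀ y ∈ 𝒳, f x + ⟪gradf x, y - x⟫ ≤ f y)
    (hsmooth : ∀ x ∈ 𝒳, ∀ y ∈ 𝒳,
      f y ≤ f x + ⟪gradf x, y - x⟫ + G * ‖y - x‖ + β / 2 * ‖y - x‖ ^ 2)
    (α η : ℝ) (hα0 : 0 < α) (hα1 : α ≤ 1) (hη : 0 < η) (hβαη : β * α * η < 1)
    (xstar ym zm xt zt yt ξ : EuclideanSpace ℝ (Fin d))
    (hxstar : xstar ∈ 𝒳) (hym : ym ∈ 𝒳) (hzm : zm ∈ 𝒳) (hzt : zt ∈ 𝒳)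
    (hxt : xt = (1 - α) • ym + α • zm)
    (hyt : yt = (1 - α) • ym + α • zt)
    (hopt : 0 ≤ ⟪η • (gradf xt + ξ) + gradψ zt - gradψ zm, xstar - zt⟫) :
    η / α * (f yt - f xstar) - η / α * (1 - α) * (f ym - f xstar)
        - η ^ 2 / (1 - β * α * η) * G ^ 2 + D xstar zt - D xstar zm
      ≤ η * ⟪ξ, xstar - zm⟫ + η ^ 2 / (1 - β * α * η) * ‖ξ‖ ^ 2 := by
  have hxt_mem : xt ∈ 𝒳 := by
    rw [hxt]; exact h𝒳 hym hzm (by linarith) hα0.le (by ring)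
  have hyt_mem : yt ∈ 𝒳 := by
    rw [hyt]; exact h𝒳 hym hzt (by linarith) hα0.le (by ring)
  have hdiff : yt - xt = α • (zt - zm) := by
    rw [hxt, hyt, smul_sub]; abel
  have h1 := hsmooth xt hxt_mem yt hyt_mem
  have h2 := hconv xt hxt_mem ym hym
  have h3 := hconv xt hxt_mem xstar hxstar
  have hix : ⟪gradf xt, xt⟫ = (1 - α) * ⟪gradf xt, ym⟫ + α * ⟪gradf xt, zm⟫ := by
    conv_lhs => rw [show ⟪gradf xt, xt⟫ = ⟪gradf xt, (1 - α) • ym + α • zm⟫ by rw [← hxt]]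
    rw [inner_add_right, inner_smul_right, inner_smul_right]
  rw [hdiff, norm_smul, Real.norm_of_nonneg hα0.le, inner_smul_right, inner_sub_right] at h1
  rw [inner_sub_right] at h2 h3
  have h4 := hD_lb zt zm
  have hξ : ⟪ξ, zm - zt⟫ ≤ ‖ξ‖ * ‖zt - zm‖ := by
    rw [norm_sub_rev]; exact real_inner_le_norm _ _
  rw [hD] at h4
  rw [hD, hD]
  simp only [inner_sub_left, inner_add_left, inner_smul_left, inner_sub_right,
    RCLike.conj_to_real] at hopt h4 hξ ⊢
  set r := ‖zt - zm‖
  set s := ‖ξ‖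
  set c := 1 - β * α * η with hc
  have hcpos : 0 < c := by linarith
  have key : f yt - (1 - α) * f ym - α * f xstar
      ≤ α * (⟪gradf xt, zt⟫ - ⟪gradf xt, xstar⟫ + G * r + β * α / 2 * r ^ 2) := by
    have h2' := mul_le_mul_of_nonneg_left h2 (sub_nonneg.2 hα1)
    have h3' := mul_le_mul_of_nonneg_left h3 hα0.le
    rw [hix] at h2' h3'
    linarith
  have key2 : η / α * (f yt - f xstar) - η / α * (1 - α) * (f ym - f xstar)
      ≤ η * (⟪gradf xt, zt⟫ - ⟪gradf xt, xstar⟫ + G * r + β * α / 2 * r ^ 2) := by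
    have h := mul_le_mul_of_nonneg_left key (div_pos hη hα0).le
    have e : η / α * (α * (⟪gradf xt, zt⟫ - ⟪gradf xt, xstar⟫ + G * r + β * α / 2 * r ^ 2))
      = η * (⟪gradf xt, zt⟫ - ⟪gradf xt, xstar⟫ + G * r + β * α / 2 * r ^ 2) := by
      field_simp
    rw [e] at h
    linarith
  have quad : η * (G + s) * r - c / 2 * r ^ 2
      ≤ η ^ 2 / c * G ^ 2 + η ^ 2 / c * s ^ 2 := by
    have e : η ^ 2 / c * G ^ 2 + η ^ 2 / c * s ^ 2 - (η * (G + s) * r - c / 2 * r ^ 2)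
        = ((c * r - η * (G + s)) ^ 2 + η ^ 2 * (G - s) ^ 2) / (2 * c) := by
      field_simp
      ring
    have : 0 ≤ ((c * r - η * (G + s)) ^ 2 + η ^ 2 * (G - s) ^ 2) / (2 * c) := by positivity
    linarith
  have hξ' := mul_le_mul_of_nonneg_left hξ hη.le
  have hcr : c / 2 * r ^ 2 = 1 / 2 * r ^ 2 - η * (β * α / 2 * r ^ 2) := by
    rw [hc]; ring
  linarith
end
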